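/- Proposition 1 (linear convergence of the other variables in the Davis–Yin algorithm): Suppose γ ∈ (0, 2/L_F̃], and that for some ρ ∈ (0,1] the bound ‖r^k − r*‖² ≤ (1−ρ)^k‖r⁰ − r*‖² holds for every k ≥ 0, where r* = z* + γ·u_G*. Then for every k ≥ 0: (i) ‖z_G^{k+1} − z*‖² ≤ (1−ρ)^k‖r⁰ − r*‖²; (ii) ‖z_J^{k+1} − z*‖² ≤ 4(1−ρ)^k‖r⁰ − r*‖²; (iii) the dual variable u_J^{k+1} := (1/γ)(2·z_G^{k+1} − r^k − γ∇F̃(z_G^{k+1}) − z_J^{k+1}) satisfies ‖u_J^{k+1} + u_G* + ∇F̃(z*)‖² ≤ (4/γ²)(1−ρ)^k‖r⁰ − r*‖²; (iv) the dual variable u_G^{k+1} := (1/γ)(r^k − z_G^{k+1}) satisfies ‖u_G^{k+1} − u_G*‖² ≤ (1/γ²)(1−ρ)^k‖r⁰ − r*‖². -/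

import Mathlib

open Filter Topology RealInnerProductSpace

noncomputable section

/-- `p` is a minimizer of `y ↦ σ·G(y) + (1/2)‖y − z‖²`, i.e. `p = prox_{σG}(z)`
(the minimizer is unique when `G` is convex). -/
def IsProxPt {E : Type*} [NormedAddCommGroup E] [InnerProductSpace ℝ E]
    (σ : ℝ) (G : E → ℝ) (z p : E) : Prop :=
  ∀ y, σ * G p + ‖p - z‖ ^ 2 / 2 ≤ σ * G y + ‖y - z‖ ^ 2 / 2

/-- `u ∈ ∂G(z)`. -/
def IsSubgradientAt {E : Type*} [NormedAddCommGroup E] [InnerProductSpace ℝ E]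
    (G : E → ℝ) (z u : E) : Prop :=
  ∀ y, G z + ⟪u, y - z⟫ ≤ G y

/-!
A subdifferential is monotone, so for `u₁ ∈ ∂G(x₁)`, `u₂ ∈ ∂G(x₂)` both `x₁ - x₂` and
`σ(u₁ - u₂)` are no longer than their sum. Since `p = prox_{σG}(z)` means `z = p + σ u` with
`u ∈ ∂G(p)`, the primal and dual errors of a prox step are bounded by the error of its input. For
the first prox step of the iteration the input error is `r - r⋆`. That of the second one is
`(z_G - γ ∇F(z_G)) - (z⋆ - γ ∇F(z⋆)) - γ (u_G - u_G⋆)`, of norm at most `2 ‖r - r⋆‖`: gradient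
steps of length `γ ≤ 2 / L` are nonexpansive because `∇F` is `1 / L`-cocoercive.
-/

lemma sq_le_sq_mul_of_le_mul {a b c C : ℝ} (ha : 0 ≤ a) (h : a ≤ c * b) (hb : b ^ 2 ≤ C) :
    a ^ 2 ≤ c ^ 2 * C := calc
  a ^ 2 ≤ (c * b) ^ 2 := by gcongr
  _ = c ^ 2 * b ^ 2 := mul_pow _ _ _
  _ ≤ c ^ 2 * C := by gcongr

section InnerProductSpace

variable {E : Type*} [NormedAddCommGroup E] [InnerProductSpace ℝ E]

lemma norm_le_norm_add_of_inner_nonneg {a b : E} (h : 0 ≤ ⟪a, b⟫) : ‖a‖ ≤ ‖a + b‖ := by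
  refine (sq_le_sq₀ (norm_nonneg _) (norm_nonneg _)).1 ?_
  rw [norm_add_sq_real]
  linarith [sq_nonneg ‖b‖]

lemma norm_sub_smul_le_of_sq_norm_div_le_inner {a b : E} {L γ : ℝ}
    (h : ‖b‖ ^ 2 / L ≤ ⟪b, a⟫) (hγ0 : 0 ≤ γ) (hγ : γ ≤ 2 / L) : ‖a - γ • b‖ ≤ ‖a‖ := by
  have hinner : γ * ‖b‖ ^ 2 ≤ 2 * ⟪b, a⟫ := calc
    γ * ‖b‖ ^ 2 ≤ 2 / L * ‖b‖ ^ 2 := by gcongr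
    _ = 2 * (‖b‖ ^ 2 / L) := by ring
    _ ≤ 2 * ⟪b, a⟫ := by gcongr
  refine (sq_le_sq₀ (norm_nonneg _) (norm_nonneg _)).1 ?_
  calc ‖a - γ • b‖ ^ 2 = ‖a‖ ^ 2 + γ * (γ * ‖b‖ ^ 2 - 2 * ⟪b, a⟫) := by
        rw [norm_sub_sq_real, inner_smul_right, real_inner_comm, norm_smul, mul_pow,
          Real.norm_eq_abs, sq_abs]
        ring
    _ ≤ ‖a‖ ^ 2 := by
        linarith [mul_nonpos_of_nonneg_of_nonpos hγ0 (sub_nonpos.2 hinner)]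

end InnerProductSpace

section Subgradient

variable {E : Type*} [NormedAddCommGroup E] [InnerProductSpace ℝ E]
  {G : E → ℝ} {x x₁ x₂ u u₁ u₂ z p : E} {σ : ℝ}

lemma IsSubgradientAt.inner_sub_sub_nonneg (h₁ : IsSubgradientAt G x₁ u₁)
    (h₂ : IsSubgradientAt G x₂ u₂) : 0 ≤ ⟪x₁ - x₂, u₁ - u₂⟫ := by
  have h₁₂ := h₁ x₂
  have h₂₁ := h₂ x₁
  rw [← neg_sub x₁ x₂, inner_neg_right] at h₁₂
  rw [real_inner_comm, inner_sub_left]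
  linarith

lemma IsSubgradientAt.norm_sub_le (h₁ : IsSubgradientAt G x₁ u₁)
    (h₂ : IsSubgradientAt G x₂ u₂) (hσ : 0 ≤ σ) :
    ‖x₁ - x₂‖ ≤ ‖(x₁ + σ • u₁) - (x₂ + σ • u₂)‖ := by
  have hinner : 0 ≤ ⟪x₁ - x₂, σ • (u₁ - u₂)⟫ := by
    rw [inner_smul_right]
    exact mul_nonneg hσ (h₁.inner_sub_sub_nonneg h₂)
  convert norm_le_norm_add_of_inner_nonneg hinner using 2
  module

lemma IsSubgradientAt.norm_smul_sub_le (h₁ : IsSubgradientAt G x₁ u₁)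
    (h₂ : IsSubgradientAt G x₂ u₂) (hσ : 0 ≤ σ) :
    ‖σ • (u₁ - u₂)‖ ≤ ‖(x₁ + σ • u₁) - (x₂ + σ • u₂)‖ := by
  have hinner : 0 ≤ ⟪σ • (u₁ - u₂), x₁ - x₂⟫ := by
    rw [inner_smul_left, real_inner_comm]
    exact mul_nonneg hσ (h₁.inner_sub_sub_nonneg h₂)
  convert norm_le_norm_add_of_inner_nonneg hinner using 2
  module

lemma IsProxPt.inner_le_add_mul (h : IsProxPt σ G z p) (hG : ConvexOn ℝ Set.univ G)
    (hσ : 0 ≤ σ) (y : E) {t : ℝ} (ht0 : 0 < t) (ht1 : t ≤ 1) :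
    ⟪z - p, y - p⟫ ≤ σ * (G y - G p) + t * (‖y - p‖ ^ 2 / 2) := by
  have hmin := h ((1 - t) • p + t • y)
  have hconv : G ((1 - t) • p + t • y) ≤ (1 - t) * G p + t * G y :=
    hG.2 (Set.mem_univ p) (Set.mem_univ y) (sub_nonneg.2 ht1) ht0.le (by ring)
  have hnorm : ‖(1 - t) • p + t • y - z‖ ^ 2
      = ‖p - z‖ ^ 2 - 2 * t * ⟪z - p, y - p⟫ + t ^ 2 * ‖y - p‖ ^ 2 := by
    rw [show (1 - t) • p + t • y - z = t • (y - p) - (z - p) by module, norm_sub_sq_real,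
      inner_smul_left, real_inner_comm, norm_smul, mul_pow, Real.norm_eq_abs, sq_abs,
      norm_sub_rev z p, conj_trivial]
    ring
  rw [hnorm] at hmin
  refine le_of_mul_le_mul_left ?_ ht0
  linarith [mul_le_mul_of_nonneg_left hconv hσ]

lemma IsProxPt.isSubgradientAt (h : IsProxPt σ G z p) (hG : ConvexOn ℝ Set.univ G)
    (hσ : 0 < σ) : IsSubgradientAt G p (σ⁻¹ • (z - p)) := by
  intro y
  have hlim : Tendsto (fun t : ℝ => σ * (G y - G p) + t * (‖y - p‖ ^ 2 / 2)) (𝓝[>] 0)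
      (𝓝 (σ * (G y - G p))) :=
    tendsto_nhdsWithin_of_tendsto_nhds (Continuous.tendsto' (by fun_prop) _ _ (by simp))
  have hvar : ⟪z - p, y - p⟫ ≤ σ * (G y - G p) := by
    refine ge_of_tendsto hlim ?_
    filter_upwards [Ioc_mem_nhdsGT zero_lt_one] with t ht
    exact h.inner_le_add_mul hG hσ.le y ht.1 ht.2
  rw [inner_smul_left, conj_trivial]
  linarith [(inv_mul_le_iff₀ hσ).2 hvar]

lemma IsProxPt.norm_sub_le (h : IsProxPt σ G z p) (hG : ConvexOn ℝ Set.univ G) (hσ : 0 < σ)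
    (hu : IsSubgradientAt G x u) : ‖p - x‖ ≤ ‖z - (x + σ • u)‖ := by
  simpa [smul_inv_smul₀ hσ.ne'] using (h.isSubgradientAt hG hσ).norm_sub_le hu hσ.le

lemma IsProxPt.norm_sub_sub_smul_le (h : IsProxPt σ G z p) (hG : ConvexOn ℝ Set.univ G)
    (hσ : 0 < σ) (hu : IsSubgradientAt G x u) : ‖z - p - σ • u‖ ≤ ‖z - (x + σ • u)‖ := by
  simpa [smul_sub σ _ u, smul_inv_smul₀ hσ.ne'] using
    (h.isSubgradientAt hG hσ).norm_smul_sub_le hu hσ.le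

lemma IsProxPt.norm_inv_smul_sub_sub_le (h : IsProxPt σ G z p) (hG : ConvexOn ℝ Set.univ G)
    (hσ : 0 < σ) (hu : IsSubgradientAt G x u) :
    ‖σ⁻¹ • (z - p) - u‖ ≤ σ⁻¹ * ‖z - (x + σ • u)‖ := by
  rw [← inv_smul_smul₀ hσ.ne' u, ← smul_sub, norm_smul_of_nonneg (inv_nonneg.2 hσ.le),
    smul_inv_smul₀ hσ.ne']
  gcongr
  exact h.norm_sub_sub_smul_le hG hσ hu

end Subgradient

section Gradient

variable {E : Type*} [NormedAddCommGroup E] [InnerProductSpace ℝ E] [CompleteSpace E]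
  {F : E → ℝ} {F' : E → E} {L : ℝ}

lemma hasDerivAt_comp_lineMap_of_hasGradientAt {x y u : E} {t : ℝ}
    (h : HasGradientAt F u (AffineMap.lineMap x y t)) :
    HasDerivAt (fun s : ℝ => F (AffineMap.lineMap x y s)) ⟪u, y - x⟫ t := by
  simpa [Function.comp_def] using h.hasFDerivAt.comp_hasDerivAt t AffineMap.hasDerivAt_lineMap

lemma isSubgradientAt_of_hasGradientAt {x u : E} (hF : ConvexOn ℝ Set.univ F)
    (h : HasGradientAt F u x) : IsSubgradientAt F x u := by
  intro y
  have hline : ConvexOn ℝ Set.univ (fun s : ℝ => F (AffineMap.lineMap x y s)) :=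
    hF.comp_affineMap (AffineMap.lineMap x y)
  have hderiv : HasDerivAt (fun s : ℝ => F (AffineMap.lineMap x y s)) ⟪u, y - x⟫ 0 :=
    hasDerivAt_comp_lineMap_of_hasGradientAt (by simpa using h)
  have hslope := hline.le_slope_of_hasDerivAt (Set.mem_univ 0) (Set.mem_univ 1) zero_lt_one hderiv
  simp only [slope_def_field, AffineMap.lineMap_apply_one, AffineMap.lineMap_apply_zero, sub_zero,
    div_one] at hslope
  linarith

lemma le_add_inner_add_sq_norm_of_lipschitz_gradient {x : E} (hF' : ∀ z, HasGradientAt F (F' z) z)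
    (hlip : ∀ z, ‖F' z - F' x‖ ≤ L * ‖z - x‖) (y : E) :
    F y ≤ F x + ⟪F' x, y - x⟫ + L / 2 * ‖y - x‖ ^ 2 := by
  have hline (t : ℝ) := hasDerivAt_comp_lineMap_of_hasGradientAt (hF' (AffineMap.lineMap x y t))
  have hquad (t : ℝ) : HasDerivAt
      (fun s : ℝ => F x + s * ⟪F' x, y - x⟫ + s ^ 2 * (L / 2 * ‖y - x‖ ^ 2))
      (⟪F' x, y - x⟫ + t * L * ‖y - x‖ ^ 2) t := by
    refine HasDerivAt.congr_deriv ((((hasDerivAt_id t).mul_const ⟪F' x, y - x⟫).const_add (F x)).add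
      ((hasDerivAt_pow 2 t).mul_const (L / 2 * ‖y - x‖ ^ 2))) ?_
    push_cast
    ring
  have hderiv_le (t : ℝ) (ht : t ∈ Set.Ico (0 : ℝ) 1) :
      ⟪F' (AffineMap.lineMap x y t), y - x⟫ ≤ ⟪F' x, y - x⟫ + t * L * ‖y - x‖ ^ 2 := by
    rw [← sub_le_iff_le_add', ← inner_sub_left]
    calc ⟪F' (AffineMap.lineMap x y t) - F' x, y - x⟫
        ≤ ‖F' (AffineMap.lineMap x y t) - F' x‖ * ‖y - x‖ := real_inner_le_norm _ _
      _ ≤ L * ‖AffineMap.lineMap x y t - x‖ * ‖y - x‖ := by gcongr; exact hlip _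
      _ = t * L * ‖y - x‖ ^ 2 := by
        rw [AffineMap.lineMap_apply_module', add_sub_cancel_right, norm_smul_of_nonneg ht.1]
        ring
  simpa using image_le_of_deriv_right_le_deriv_boundary
    (fun t _ => (hline t).continuousAt.continuousWithinAt)
    (fun t _ => (hline t).hasDerivWithinAt) (by simp)
    (fun t _ => (hquad t).continuousAt.continuousWithinAt)
    (fun t _ => (hquad t).hasDerivWithinAt) hderiv_le (Set.right_mem_Icc.2 zero_le_one)

lemma IsSubgradientAt.add_inner_add_sq_norm_sub_le {x y u : E} (hu : IsSubgradientAt F x u)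
    (hL : 0 < L) (hF' : ∀ z, HasGradientAt F (F' z) z)
    (hlip : ∀ z, ‖F' z - F' y‖ ≤ L * ‖z - y‖) :
    F x + ⟪u, y - x⟫ + ‖F' y - u‖ ^ 2 / (2 * L) ≤ F y := by
  -- Compare both bounds at the minimizer of the quadratic majorant of `F - ⟪u, ·⟫` at `y`.
  set d := F' y - u with hd
  have hlower := hu (y - L⁻¹ • d)
  have hupper := le_add_inner_add_sq_norm_of_lipschitz_gradient hF' hlip (y - L⁻¹ • d)
  have hinner : ⟪F' y, d⟫ = ⟪u, d⟫ + ‖d‖ ^ 2 := by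
    rw [← real_inner_self_eq_norm_sq, ← inner_add_left, hd, add_sub_cancel]
  rw [sub_right_comm, inner_sub_right, inner_smul_right] at hlower
  rw [sub_sub_cancel_left, inner_neg_right, inner_smul_right, norm_neg,
    norm_smul_of_nonneg (inv_nonneg.2 hL.le), hinner] at hupper
  have hcoeff : L / 2 * (L⁻¹ * ‖d‖) ^ 2 = L⁻¹ * ‖d‖ ^ 2 - ‖d‖ ^ 2 / (2 * L) := by
    field_simp
    ring
  linarith

lemma sq_norm_sub_div_le_inner_of_lipschitz_gradient (hF : ConvexOn ℝ Set.univ F) (hL : 0 < L)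
    (hF' : ∀ z, HasGradientAt F (F' z) z)
    (hlip : ∀ z z', ‖F' z - F' z'‖ ≤ L * ‖z - z'‖) (x y : E) :
    ‖F' x - F' y‖ ^ 2 / L ≤ ⟪F' x - F' y, x - y⟫ := by
  have hxy := (isSubgradientAt_of_hasGradientAt hF (hF' x)).add_inner_add_sq_norm_sub_le hL hF'
    (hlip · y)
  have hyx := (isSubgradientAt_of_hasGradientAt hF (hF' y)).add_inner_add_sq_norm_sub_le hL hF'
    (hlip · x)
  rw [norm_sub_rev, ← neg_sub x y, inner_neg_right] at hxy
  have hhalf : ‖F' x - F' y‖ ^ 2 / L = 2 * (‖F' x - F' y‖ ^ 2 / (2 * L)) := by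
    field_simp
  rw [inner_sub_left, hhalf]
  linarith

lemma norm_gradient_step_sub_le (hF : ConvexOn ℝ Set.univ F) (hL : 0 < L)
    (hF' : ∀ z, HasGradientAt F (F' z) z)
    (hlip : ∀ z z', ‖F' z - F' z'‖ ≤ L * ‖z - z'‖) {γ : ℝ} (hγ0 : 0 ≤ γ) (hγ : γ ≤ 2 / L)
    (x y : E) : ‖(x - γ • F' x) - (y - γ • F' y)‖ ≤ ‖x - y‖ := by
  convert norm_sub_smul_le_of_sq_norm_div_le_inner
    (sq_norm_sub_div_le_inner_of_lipschitz_gradient hF hL hF' hlip x y) hγ0 hγ using 2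
  module

end Gradient

section DavisYin

variable {E : Type*} [NormedAddCommGroup E] [InnerProductSpace ℝ E] {G : E → ℝ} {F' : E → E}
  {γ : ℝ} {x u r p : E}

lemma IsProxPt.norm_reflected_gradient_step_sub_le (hp : IsProxPt γ G r p)
    (hG : ConvexOn ℝ Set.univ G) (hγ : 0 < γ) (hu : IsSubgradientAt G x u)
    (hstep : ‖(p - γ • F' p) - (x - γ • F' x)‖ ≤ ‖p - x‖) :
    ‖(2 : ℝ) • p - r - γ • F' p - (x + γ • (-F' x - u))‖ ≤ 2 * ‖r - (x + γ • u)‖ := calc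
  ‖(2 : ℝ) • p - r - γ • F' p - (x + γ • (-F' x - u))‖
    = ‖(p - γ • F' p) - (x - γ • F' x) - (r - p - γ • u)‖ := by congr 1; module
  _ ≤ ‖(p - γ • F' p) - (x - γ • F' x)‖ + ‖r - p - γ • u‖ := _root_.norm_sub_le _ _
  _ ≤ ‖r - (x + γ • u)‖ + ‖r - (x + γ • u)‖ :=
    add_le_add (hstep.trans (hp.norm_sub_le hG hγ hu)) (hp.norm_sub_sub_smul_le hG hγ hu)
  _ = 2 * ‖r - (x + γ • u)‖ := (two_mul _).symm

theorem davis_yin_other_variables_linear_general [CompleteSpace E] {F J : E → ℝ} {L : ℝ}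
    (hL : 0 < L) (hF : ConvexOn ℝ Set.univ F) (hG : ConvexOn ℝ Set.univ G)
    (hJ : ConvexOn ℝ Set.univ J) (hF' : ∀ z, HasGradientAt F (F' z) z)
    (hlip : ∀ z z', ‖F' z - F' z'‖ ≤ L * ‖z - z'‖)
    (hu : IsSubgradientAt G x u) (hv : IsSubgradientAt J x (-F' x - u))
    (hγ0 : 0 < γ) (hγ : γ ≤ 2 / L) {q : E} (hp : IsProxPt γ G r p)
    (hq : IsProxPt γ J ((2 : ℝ) • p - r - γ • F' p) q)
    {C : ℝ} (hr : ‖r - (x + γ • u)‖ ^ 2 ≤ C) :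
    ‖p - x‖ ^ 2 ≤ C ∧
    ‖q - x‖ ^ 2 ≤ 4 * C ∧
    ‖(1 / γ) • ((2 : ℝ) • p - r - γ • F' p - q) + u + F' x‖ ^ 2 ≤ 4 / γ ^ 2 * C ∧
    ‖(1 / γ) • (r - p) - u‖ ^ 2 ≤ 1 / γ ^ 2 * C := by
  have hs := hp.norm_reflected_gradient_step_sub_le hG hγ0 hu
    (norm_gradient_step_sub_le hF hL hF' hlip hγ0.le hγ p x)
  have hdual := (hq.norm_inv_smul_sub_sub_le hJ hγ0 hv).trans
    (mul_le_mul_of_nonneg_left hs (inv_nonneg.2 hγ0.le))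
  rw [← mul_assoc, sub_sub_eq_add_sub, sub_neg_eq_add, ← one_div] at hdual
  refine ⟨?_, ?_, ?_, ?_⟩
  · exact (pow_le_pow_left₀ (norm_nonneg _) (hp.norm_sub_le hG hγ0 hu) 2).trans hr
  · convert sq_le_sq_mul_of_le_mul (norm_nonneg _) ((hq.norm_sub_le hJ hγ0 hv).trans hs) hr using 2
    norm_num
  · convert sq_le_sq_mul_of_le_mul (norm_nonneg _) hdual hr using 2
    ring
  · convert sq_le_sq_mul_of_le_mul (norm_nonneg _)
      (hp.norm_inv_smul_sub_sub_le hG hγ0 hu) hr using 2 <;> simp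

end DavisYin

/-- Proposition 1: linear convergence of the other variables of the Davis–Yin
algorithm, given linear convergence of `r^k`. -/
theorem davis_yin_other_variables_linear
    {𝒵 : Type*}
    [NormedAddCommGroup 𝒵] [InnerProductSpace ℝ 𝒵] [FiniteDimensional ℝ 𝒵]
    (Ft G J : 𝒵 → ℝ) (Ft' : 𝒵 → 𝒵) (L_Ft : ℝ)
    (hLFt : 0 < L_Ft)
    (hFtconv : ConvexOn ℝ Set.univ Ft)
    (hGconv : ConvexOn ℝ Set.univ G)
    (hJconv : ConvexOn ℝ Set.univ J)
    (hFtgrad : ∀ z, HasGradientAt Ft (Ft' z) z)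
    (hFtlip : ∀ z z', ‖Ft' z - Ft' z'‖ ≤ L_Ft * ‖z - z'‖)
    -- z* is a minimizer, with dual certificate u_G*
    (zstar : 𝒵)
    (hzstar : ∀ y, Ft zstar + G zstar + J zstar ≤ Ft y + G y + J y)
    (uGstar : 𝒵)
    (huGstar : IsSubgradientAt G zstar uGstar)
    (huGstar' : IsSubgradientAt J zstar (-(Ft' zstar) - uGstar))
    -- constant stepsize
    (γ : ℝ) (hγ0 : 0 < γ) (hγ2 : γ ≤ 2 / L_Ft)
    -- r* = z* + γ u_G*
    (rstar : 𝒵) (hrstar : rstar = zstar + γ • uGstar)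
    -- Davis–Yin iterates, r-form
    (r zG zJ : ℕ → 𝒵)
    (hzG : ∀ k, IsProxPt γ G (r k) (zG (k+1)))
    (hzJ : ∀ k, IsProxPt γ J
      ((2:ℝ) • zG (k+1) - r k - γ • Ft' (zG (k+1))) (zJ (k+1)))
    (hr : ∀ k, r (k+1) = zJ (k+1) + r k - zG (k+1))
    -- assumed linear convergence of r
    (ρ : ℝ) (hρ0 : 0 < ρ) (hρ1 : ρ ≤ 1)
    (hbound : ∀ k : ℕ, ‖r k - rstar‖^2 ≤ (1 - ρ)^k * ‖r 0 - rstar‖^2) :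
    ∀ k : ℕ,
      ‖zG (k+1) - zstar‖^2 ≤ (1 - ρ)^k * ‖r 0 - rstar‖^2 ∧
      ‖zJ (k+1) - zstar‖^2 ≤ 4 * (1 - ρ)^k * ‖r 0 - rstar‖^2 ∧
      ‖(1/γ) • ((2:ℝ) • zG (k+1) - r k - γ • Ft' (zG (k+1)) - zJ (k+1))
          + uGstar + Ft' zstar‖^2
        ≤ 4 / γ^2 * (1 - ρ)^k * ‖r 0 - rstar‖^2 ∧
      ‖(1/γ) • (r k - zG (k+1)) - uGstar‖^2
        ≤ 1 / γ^2 * (1 - ρ)^k * ‖r 0 - rstar‖^2 := by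
  simpa only [mul_assoc] using fun k => davis_yin_other_variables_linear_general hLFt hFtconv hGconv
    hJconv hFtgrad hFtlip huGstar huGstar' hγ0 hγ2 (hzG k) (hzJ k) (hrstar ▸ hbound k)
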